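/- For every Schwartz function W ∈ 𝒮(ℝ,ℂ), the principal value integral PV ∫_ℝ e^{−iut} W(u)/u du := lim_{δ→0⁺} ∫_{|u|≥δ} e^{−iut} W(u)/u du exists for every t > 0, and lim_{t→+∞} PV ∫_ℝ e^{−iut} W(u)/u du = −iπ W(0). -/

import Mathlib

/-!
Let `g u = exp (-π u²)` and write `W = W 0 * g + V`, so that `V 0 = 0`.

The function `V u / u` extends to an integrable function (`integrable_dslope_zero`), so its
contribution to the principal value is an ordinary Fourier integral, which tends to `0` by the
Riemann–Lebesgue lemma (`tendsto_integral_phase_mul`).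

For the Gaussian part, `g u / u` is odd and drops out of every symmetric truncation, so the principal
value of `e^{-iut} g u / u` is the absolutely convergent integral `F t` of `(e^{-iut} - 1) g u / u`.
Here `F 0 = 0` and `F'` is `-i` times the Fourier transform of `g`, that is
`F' t = -i exp (-t² / (4π))` (`hasDerivAt_integral_gaussKernel`). Hence `F t` tends to `-i` times the
Gaussian integral over the half-line, namely `-iπ` (`tendsto_integral_gaussKernel`).
-/

open MeasureTheory Filter

/-- Removing the shrinking symmetric interval `|u| < δ` does not affect the integral of an
integrable function in the limit `δ → 0⁺`. -/
lemma tendsto_truncated_integral {f : ℝ → ℂ} (hf : Integrable f) :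
    Tendsto (fun δ : ℝ => ∫ u in {u : ℝ | δ ≤ |u|}, f u)
      (nhdsWithin 0 (Set.Ioi 0)) (nhds (∫ u, f u)) := by
  have hc : AECover volume (nhdsWithin (0 : ℝ) (Set.Ioi 0)) (fun δ : ℝ => {u : ℝ | δ ≤ |u|}) := by
    refine ⟨?_, fun δ => measurableSet_le measurable_const measurable_norm⟩
    filter_upwards [compl_mem_ae_iff.mpr (measure_singleton (0 : ℝ))] with u hu
    have hu' : 0 < |u| := abs_pos.mpr hu
    exact mem_nhdsWithin_of_mem_nhds
      ((eventually_lt_nhds hu').mono fun δ hδ => le_of_lt hδ)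
  exact hc.integral_tendsto_of_countably_generated hf

lemma truncated_integral_odd {f : ℝ → ℂ} (hf : ∀ u, f (-u) = -f u) (δ : ℝ) :
    ∫ u in {u : ℝ | δ ≤ |u|}, f u = 0 := by
  have hm : MeasurableSet {u : ℝ | δ ≤ |u|} := measurableSet_le measurable_const measurable_norm
  rw [← integral_indicator hm]
  have h := integral_neg_eq_self ({u : ℝ | δ ≤ |u|}.indicator f) volume
  have h2 : (fun u => {u : ℝ | δ ≤ |u|}.indicator f (-u)) =
      fun u => - {u : ℝ | δ ≤ |u|}.indicator f u := by
    funext u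
    by_cases hu : δ ≤ |u| <;> simp [Set.indicator, hu, hf]
  rw [h2, integral_neg] at h
  exact self_eq_neg.mp h.symm

/-- The self-dual Gaussian `u ↦ exp (-π u²)`, as a complex-valued function. -/
noncomputable def gaussC (u : ℝ) : ℂ := Complex.exp (-(Real.pi : ℂ) * (u : ℂ) ^ 2)

lemma integrable_gaussC : Integrable gaussC :=
  integrable_cexp_neg_mul_sq (by simpa using Real.pi_pos)

lemma continuous_gaussC : Continuous gaussC := by unfold gaussC; fun_prop

lemma gaussC_zero : gaussC 0 = 1 := by simp [gaussC]

lemma norm_phase (u t : ℝ) : ‖Complex.exp (-Complex.I * (u : ℂ) * (t : ℂ))‖ = 1 := by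
  have : -Complex.I * (u : ℂ) * (t : ℂ) = ((-(u * t) : ℝ) : ℂ) * Complex.I := by push_cast; ring
  rw [this, Complex.norm_exp_ofReal_mul_I]

/-- The regularized integrand `(e^{-iut} - 1) / u * exp (-π u²)`. It differs from
`e^{-iut} exp (-π u²) / u` by an odd function, so its integral is the principal value for the
Gaussian. At `u = 0` it takes the junk value `0`, which is irrelevant for integration. -/
noncomputable def gaussKernel (t u : ℝ) : ℂ :=
  (Complex.exp (-Complex.I * (u : ℂ) * (t : ℂ)) - 1) / (u : ℂ) * gaussC u

lemma hasDerivAt_gaussKernel {u : ℝ} (hu : u ≠ 0) (t : ℝ) :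
    HasDerivAt (fun t => gaussKernel t u)
      (-Complex.I * (Complex.exp (-Complex.I * (u : ℂ) * (t : ℂ)) * gaussC u)) t := by
  have hu' : (u : ℂ) ≠ 0 := by exact_mod_cast hu
  have h1 : HasDerivAt (fun t : ℝ => -Complex.I * (u : ℂ) * (t : ℂ)) (-Complex.I * (u : ℂ)) t := by
    simpa using (Complex.ofRealCLM.hasDerivAt (x := t)).const_mul (-Complex.I * (u : ℂ))
  have h2 := (((h1.cexp).sub_const 1).div_const (u : ℂ)).mul_const (gaussC u)
  refine h2.congr_deriv ?_
  field_simp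

lemma measurable_gaussKernel (t : ℝ) : Measurable (gaussKernel t) := by
  have := continuous_gaussC.measurable
  unfold gaussKernel
  fun_prop

lemma integrable_gaussKernel (t : ℝ) : Integrable (gaussKernel t) := by
  refine (integrable_gaussC.norm.const_mul |t|).mono' (measurable_gaussKernel t).aestronglyMeasurable
    (ae_of_all _ fun u => ?_)
  have h1 : ‖Complex.exp (-Complex.I * (u : ℂ) * (t : ℂ)) - 1‖ ≤ |t| * |u| := by
    have h := Real.norm_exp_I_mul_ofReal_sub_one_le (x := -(u * t))
    rw [norm_neg, norm_mul, Real.norm_eq_abs, Real.norm_eq_abs, mul_comm |u|] at h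
    convert h using 4
    push_cast
    ring
  rw [gaussKernel, norm_mul, norm_div, Complex.norm_real, Real.norm_eq_abs]
  gcongr
  exact div_le_of_le_mul₀ (abs_nonneg u) (abs_nonneg t) h1

/-- The derivative is the Fourier transform of the Gaussian: differentiating in `t` cancels the
singular factor `1 / u`. -/
lemma hasDerivAt_integral_gaussKernel (t : ℝ) :
    HasDerivAt (fun t => ∫ u, gaussKernel t u)
      (-Complex.I * ((Real.exp (-(1 / (4 * Real.pi)) * t ^ 2) : ℝ) : ℂ)) t := by
  have hae : ∀ᵐ u : ℝ, u ≠ 0 := compl_mem_ae_iff.mpr (measure_singleton (0 : ℝ))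
  have hcont := continuous_gaussC
  have h := (hasDerivAt_integral_of_dominated_loc_of_deriv_le (μ := volume)
    (F := gaussKernel) (x₀ := t) (s := Set.univ) (bound := fun u => ‖gaussC u‖)
    (F' := fun t u => -Complex.I * (Complex.exp (-Complex.I * (u : ℂ) * (t : ℂ)) * gaussC u))
    univ_mem
    (Eventually.of_forall fun s => (measurable_gaussKernel s).aestronglyMeasurable)
    (integrable_gaussKernel t)
    (Continuous.aestronglyMeasurable (by fun_prop))
    (ae_of_all _ fun u s _ => by simp only [norm_mul, norm_phase]; simp)
    integrable_gaussC.norm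
    (hae.mono fun u hu s _ => hasDerivAt_gaussKernel hu s)).2
  refine h.congr_deriv ?_
  rw [integral_const_mul]
  congr 1
  have hpi : (Real.pi : ℂ) ≠ 0 := by exact_mod_cast Real.pi_ne_zero
  have hF := fourierIntegral_gaussian (b := (Real.pi : ℂ)) (by simpa using Real.pi_pos) (-(t : ℂ))
  rw [div_self hpi, Complex.one_cpow, one_mul] at hF
  calc _ = ∫ u : ℝ, Complex.exp (Complex.I * (-(t : ℂ)) * u) *
        Complex.exp (-(Real.pi : ℂ) * (u : ℂ) ^ 2) := by
        congr 1
        funext u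
        rw [gaussC]
        congr 2
        ring
    _ = _ := by
        rw [hF]
        push_cast
        congr 1
        ring

/-- The theorem for the Gaussian: the half-line integral of its Fourier transform is `π`. -/
lemma tendsto_integral_gaussKernel :
    Tendsto (fun t => ∫ u, gaussKernel t u) atTop (nhds (-Complex.I * (Real.pi : ℂ))) := by
  have hb : 0 < 1 / (4 * Real.pi) := by positivity
  have hint : Integrable (fun s : ℝ => -Complex.I *
      ((Real.exp (-(1 / (4 * Real.pi)) * s ^ 2) : ℝ) : ℂ)) :=
    (integrable_exp_neg_mul_sq hb).ofReal.const_mul _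
  have hlim := intervalIntegral_tendsto_integral_Ioi 0 hint.integrableOn tendsto_id
  have hval : ∫ s in Set.Ioi (0 : ℝ), -Complex.I *
      ((Real.exp (-(1 / (4 * Real.pi)) * s ^ 2) : ℝ) : ℂ) = -Complex.I * (Real.pi : ℂ) := by
    have hsq : Real.pi / (1 / (4 * Real.pi)) = (2 * Real.pi) ^ 2 := by field_simp; norm_num
    rw [integral_const_mul, integral_complex_ofReal, integral_gaussian_Ioi, hsq,
      Real.sqrt_sq (by positivity)]
    congr 2
    ring
  rw [hval] at hlim
  refine hlim.congr fun t => ?_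
  have hzero : ∫ u, gaussKernel 0 u = 0 := by simp [gaussKernel]
  rw [id, intervalIntegral.integral_eq_sub_of_hasDerivAt
    (fun s _ => hasDerivAt_integral_gaussKernel s) hint.intervalIntegrable, hzero, sub_zero]

/-- The quotient `V u / u`, with its removable singularity filled in, is integrable. -/
lemma integrable_dslope_zero {V : ℝ → ℂ} (hV : Differentiable ℝ V) (hi : Integrable V)
    (h0 : V 0 = 0) : Integrable (dslope V 0) := by
  have hc : Continuous (dslope V 0) := by
    rw [← continuousOn_univ, continuousOn_dslope univ_mem]
    exact ⟨hV.continuous.continuousOn, hV 0⟩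
  rw [← integrableOn_univ, ← Set.union_compl_self (Set.Icc (-1 : ℝ) 1)]
  refine IntegrableOn.union (hc.integrableOn_Icc) ?_
  refine Integrable.mono' hi.norm.integrableOn hc.aestronglyMeasurable ?_
  refine (ae_restrict_iff' measurableSet_Icc.compl).mpr (ae_of_all _ fun u hu => ?_)
  have hu1 : 1 ≤ |u| := by
    by_contra! hlt
    exact hu ⟨(abs_lt.mp hlt).1.le, (abs_lt.mp hlt).2.le⟩
  have hu0 : u ≠ 0 := by
    rintro rfl
    norm_num at hu1
  rw [dslope_of_ne _ hu0, slope_def_module, h0, sub_zero, sub_zero, norm_smul, norm_inv,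
    Real.norm_eq_abs]
  exact mul_le_of_le_one_left (norm_nonneg _) (inv_le_one_of_one_le₀ hu1)

/-- The Riemann–Lebesgue lemma in the angular-frequency normalization. -/
lemma tendsto_integral_phase_mul (h : ℝ → ℂ) :
    Tendsto (fun t : ℝ => ∫ u : ℝ, Complex.exp (-Complex.I * (u : ℂ) * (t : ℂ)) * h u)
      atTop (nhds 0) := by
  have hs : Tendsto (fun t : ℝ => t / (2 * Real.pi)) atTop (cocompact ℝ) :=
    (tendsto_id.atTop_div_const (by positivity)).mono_right atTop_le_cocompact
  refine ((Real.tendsto_integral_exp_smul_cocompact h).comp hs).congr fun t => ?_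
  refine integral_congr_ae (ae_of_all _ fun u => ?_)
  simp only [Circle.smul_def, smul_eq_mul, Real.fourierChar_apply]
  congr 2
  have hpi : (Real.pi : ℂ) ≠ 0 := by exact_mod_cast Real.pi_ne_zero
  push_cast
  field_simp

lemma integrableOn_gaussC_div {δ : ℝ} (hδ : 0 < δ) :
    IntegrableOn (fun u : ℝ => gaussC u / (u : ℂ)) {u : ℝ | δ ≤ |u|} := by
  have hm : MeasurableSet {u : ℝ | δ ≤ |u|} := measurableSet_le measurable_const measurable_norm
  have hg := continuous_gaussC.measurable
  refine Integrable.mono' (integrable_gaussC.norm.div_const δ).integrableOn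
    (Measurable.aestronglyMeasurable (by fun_prop)) ?_
  refine (ae_restrict_iff' hm).mpr (ae_of_all _ fun u hu => ?_)
  rw [norm_div, Complex.norm_real, Real.norm_eq_abs]
  exact div_le_div_of_nonneg_left (norm_nonneg _) hδ hu

/-- For every Schwartz function `W ∈ 𝒮(ℝ,ℂ)`, the principal value
`PV ∫ e^{−iut} W(u)/u du = lim_{δ→0⁺} ∫_{|u|≥δ} e^{−iut} W(u)/u du` exists for every `t > 0`,
and it converges to `−iπ W(0)` as `t → +∞`. -/
theorem statement5 (W : SchwartzMap ℝ ℂ) :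
    ∃ PVf : ℝ → ℂ,
      (∀ t : ℝ, 0 < t →
        Tendsto (fun δ : ℝ =>
            ∫ u in {u : ℝ | δ ≤ |u|},
              Complex.exp (-Complex.I * (u : ℂ) * (t : ℂ)) * W u / (u : ℂ))
          (nhdsWithin 0 (Set.Ioi 0)) (nhds (PVf t))) ∧
      Tendsto PVf atTop (nhds (-Complex.I * (Real.pi : ℂ) * W 0)) := by
  
  set V : ℝ → ℂ := fun u => W u - W 0 * gaussC u with hVdef
  have hVd : Differentiable ℝ V := by
    have hW : Differentiable ℝ W := W.differentiable
    have hg : Differentiable ℝ gaussC := by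
      have : Differentiable ℝ fun u : ℝ => (u : ℂ) := Complex.ofRealCLM.differentiable
      unfold gaussC
      fun_prop
    fun_prop
  have hVi : Integrable V := W.integrable.sub (integrable_gaussC.const_mul _)
  have hV0 : V 0 = 0 := by simp [hVdef, gaussC_zero]
  have hh := integrable_dslope_zero hVd hVi hV0
  set h := dslope V 0 with hhdef
  have hphase (t : ℝ) :
      Integrable fun u : ℝ => Complex.exp (-Complex.I * (u : ℂ) * (t : ℂ)) * h u :=
    hh.bdd_mul (c := 1) (Continuous.aestronglyMeasurable (by fun_prop))
      (ae_of_all _ fun u => (norm_phase u t).le)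
  have hreg (t : ℝ) : Integrable fun u : ℝ =>
      Complex.exp (-Complex.I * (u : ℂ) * (t : ℂ)) * h u + W 0 * gaussKernel t u :=
    (hphase t).add ((integrable_gaussKernel t).const_mul _)
  refine ⟨fun t => ∫ u : ℝ,
    (Complex.exp (-Complex.I * (u : ℂ) * (t : ℂ)) * h u + W 0 * gaussKernel t u), ?_, ?_⟩
  · intro t _
    refine (tendsto_truncated_integral (hreg t)).congr' ?_
    filter_upwards [self_mem_nhdsWithin] with δ hδ
    have hδ' : 0 < δ := hδ
    have hm : MeasurableSet {u : ℝ | δ ≤ |u|} := measurableSet_le measurable_const measurable_norm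
    have hodd : ∫ u in {u : ℝ | δ ≤ |u|}, W 0 * (gaussC u / (u : ℂ)) = 0 :=
      truncated_integral_odd (fun u => by simp [gaussC, div_neg]) δ
    rw [← add_zero (∫ u in _, _), ← hodd,
      ← integral_add (hreg t).integrableOn ((integrableOn_gaussC_div hδ').const_mul _)]
    refine setIntegral_congr_fun hm fun u hu => ?_
    have hu0 : u ≠ 0 := abs_pos.mp (hδ'.trans_le hu)
    have hu0' : (u : ℂ) ≠ 0 := by exact_mod_cast hu0
    have hhu : h u = (W u - W 0 * gaussC u) / u := by
      rw [hhdef, dslope_of_ne _ hu0, slope_def_module, hV0, sub_zero, sub_zero, hVdef,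
        Complex.real_smul, Complex.ofReal_inv, div_eq_inv_mul]
    simp only [hhu, gaussKernel]
    field_simp
    ring
  · have hlim := (tendsto_integral_phase_mul h).add (tendsto_integral_gaussKernel.const_mul (W 0))
    rw [zero_add, mul_comm (W 0)] at hlim
    refine hlim.congr fun t => ?_
    rw [integral_add (hphase t) ((integrable_gaussKernel t).const_mul _), integral_const_mul]
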